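/- Let S be a stable matching in G*. Then S' is a popular max-matching in G. -/

import Mathlib

open Classical

noncomputable section

namespace PopMax

/-- A bipartite preference instance `G = (A ∪ B, E)`:
`E a b` says there is an edge between `a ∈ A` and `b ∈ B`;
`prefA a b b'` says `a` strictly prefers `b` to `b'`;
`prefB b a a'` says `b` strictly prefers `a` to `a'`. -/
structure PrefSys (A : Type*) (B : Type*) where
  E : A → B → Prop
  prefA : A → B → B → Prop
  prefB : B → A → A → Prop

/-- Every node has a strict (linear) preference order over its neighbors. -/
def PrefSys.IsValid {A B : Type*} (I : PrefSys A B) : Prop :=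
  (∀ a b, ¬ I.prefA a b b) ∧
  (∀ a b₁ b₂ b₃, I.prefA a b₁ b₂ → I.prefA a b₂ b₃ → I.prefA a b₁ b₃) ∧
  (∀ a b₁ b₂, I.E a b₁ → I.E a b₂ → b₁ ≠ b₂ → I.prefA a b₁ b₂ ∨ I.prefA a b₂ b₁) ∧
  (∀ b a, ¬ I.prefB b a a) ∧
  (∀ b a₁ a₂ a₃, I.prefB b a₁ a₂ → I.prefB b a₂ a₃ → I.prefB b a₁ a₃) ∧
  (∀ b a₁ a₂, I.E a₁ b → I.E a₂ b → a₁ ≠ a₂ → I.prefB b a₁ a₂ ∨ I.prefB b a₂ a₁)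

variable {A B : Type*}

/-- A matching: a set of pairwise disjoint edges. -/
def IsMatching (I : PrefSys A B) (M : Finset (A × B)) : Prop :=
  (∀ p ∈ M, I.E p.1 p.2) ∧
  (∀ p ∈ M, ∀ q ∈ M, p.1 = q.1 → p = q) ∧
  (∀ p ∈ M, ∀ q ∈ M, p.2 = q.2 → p = q)

def matchedA (M : Finset (A × B)) (a : A) : Prop := ∃ b, (a, b) ∈ M
def matchedB (M : Finset (A × B)) (b : B) : Prop := ∃ a, (a, b) ∈ M

/-- A maximum matching: a matching of maximum cardinality. -/
def IsMaximumMatching (I : PrefSys A B) (M : Finset (A × B)) : Prop :=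
  IsMatching I M ∧ ∀ N : Finset (A × B), IsMatching I N → N.card ≤ M.card

/-- A perfect matching matches all nodes. -/
def IsPerfectMatching (I : PrefSys A B) (M : Finset (A × B)) : Prop :=
  IsMatching I M ∧ (∀ a, matchedA M a) ∧ (∀ b, matchedB M b)

/-- `a ∈ A` prefers matching `M` to matching `N`. -/
def prefersA (I : PrefSys A B) (a : A) (M N : Finset (A × B)) : Prop :=
  ∃ b, (a, b) ∈ M ∧ (¬ matchedA N a ∨ ∃ b', (a, b') ∈ N ∧ I.prefA a b b')

/-- `b ∈ B` prefers matching `M` to matching `N`. -/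
def prefersB (I : PrefSys A B) (b : B) (M N : Finset (A × B)) : Prop :=
  ∃ a, (a, b) ∈ M ∧ (¬ matchedB N b ∨ ∃ a', (a', b) ∈ N ∧ I.prefB b a a')

/-- A node `u ∈ A ∪ B` prefers matching `M` to matching `N`. -/
def prefers (I : PrefSys A B) (u : A ⊕ B) (M N : Finset (A × B)) : Prop :=
  match u with
  | Sum.inl a => prefersA I a M N
  | Sum.inr b => prefersB I b M N

/-- `φ(M,N)`: the number of nodes preferring `M` to `N`. -/
def phi [Fintype A] [Fintype B] (I : PrefSys A B) (M N : Finset (A × B)) : ℕ :=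
  (Finset.univ.filter (fun u : A ⊕ B => prefers I u M N)).card

/-- `Δ(M,N) = φ(M,N) − φ(N,M)`. -/
def Delta [Fintype A] [Fintype B] (I : PrefSys A B) (M N : Finset (A × B)) : ℤ :=
  (phi I M N : ℤ) - (phi I N M : ℤ)

/-- A popular max-matching: a maximum matching `M` with `Δ(M,N) ≥ 0`
for every maximum matching `N`. -/
def IsPopularMaxMatching [Fintype A] [Fintype B] (I : PrefSys A B)
    (M : Finset (A × B)) : Prop :=
  IsMaximumMatching I M ∧
    ∀ N : Finset (A × B), IsMaximumMatching I N → 0 ≤ Delta I M N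

/-- The edge `(a,b) ∉ M` blocks `M`. -/
def Blocks (I : PrefSys A B) (M : Finset (A × B)) (a : A) (b : B) : Prop :=
  I.E a b ∧ (a, b) ∉ M ∧
  (¬ matchedA M a ∨ ∃ b', (a, b') ∈ M ∧ I.prefA a b b') ∧
  (¬ matchedB M b ∨ ∃ a', (a', b) ∈ M ∧ I.prefB b a a')

/-- A stable matching: a matching with no blocking edge. -/
def IsStable (I : PrefSys A B) (S : Finset (A × B)) : Prop :=
  IsMatching I S ∧ ∀ a b, ¬ Blocks I S a b

/-- The edge weight `wt_M(a,b) ∈ {0, ±2}`. -/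
def wt (I : PrefSys A B) (M : Finset (A × B)) (a : A) (b : B) : ℤ :=
  if Blocks I M a b then 2
  else if (∃ b', (a, b') ∈ M ∧ I.prefA a b' b) ∧ (∃ a', (a', b) ∈ M ∧ I.prefB b a' a) then -2
  else 0

/-- The underlying simple graph on the node set `A ⊕ B`. -/
def graphOf (I : PrefSys A B) : SimpleGraph (A ⊕ B) :=
  SimpleGraph.fromRel (fun u w =>
    match u, w with
    | Sum.inl a, Sum.inr b => I.E a b
    | _, _ => False)

/-- The (undirected) edge `e` is an edge of the matching `M`. -/
def edgeInM (M : Finset (A × B)) (e : Sym2 (A ⊕ B)) : Prop :=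
  ∃ a b, (a, b) ∈ M ∧ e = s(Sum.inl a, Sum.inr b)

/-- Consecutive edges alternate between `M` and `E ∖ M`. -/
def altRel (M : Finset (A × B)) (e f : Sym2 (A ⊕ B)) : Prop :=
  edgeInM M e ↔ ¬ edgeInM M f

/-- An alternating path with respect to `M`. -/
def IsAltPath (I : PrefSys A B) (M : Finset (A × B)) {u w : A ⊕ B}
    (p : (graphOf I).Walk u w) : Prop :=
  p.IsPath ∧ List.Chain' (altRel M) p.edges

/-- An alternating cycle with respect to `M` (alternation also across the wrap-around). -/
def IsAltCycle (I : PrefSys A B) (M : Finset (A × B)) {w : A ⊕ B}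
    (c : (graphOf I).Walk w w) : Prop :=
  c.IsCycle ∧ List.Chain' (altRel M) (c.edges ++ c.edges.take 1)

/-- `wt_M` as a function on undirected edges. -/
def wtSym (I : PrefSys A B) (M : Finset (A × B)) : Sym2 (A ⊕ B) → ℤ :=
  Sym2.lift ⟨fun u w =>
      match u, w with
      | Sum.inl a, Sum.inr b => wt I M a b
      | Sum.inr b, Sum.inl a => wt I M a b
      | _, _ => 0,
    by rintro (a | b) (a' | b') <;> rfl⟩

/-- `wt_M(ρ) = Σ_{e ∈ ρ} wt_M(e)` for a walk `ρ`. -/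
def wtWalk (I : PrefSys A B) (M : Finset (A × B)) {u w : A ⊕ B}
    (p : (graphOf I).Walk u w) : ℤ :=
  (p.edges.map (wtSym I M)).sum

/-- The node `u ∈ A ∪ B` is unmatched in `M`. -/
def unmatchedNode (M : Finset (A × B)) : A ⊕ B → Prop
  | Sum.inl a => ¬ matchedA M a
  | Sum.inr b => ¬ matchedB M b

/-- The set of edges `(a,b) ∈ A × B` used by the walk `p`. -/
def pairsOf [Fintype A] [Fintype B] (I : PrefSys A B) {u w : A ⊕ B}
    (p : (graphOf I).Walk u w) : Finset (A × B) :=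
  Finset.univ.filter (fun ab : A × B => s(Sum.inl ab.1, Sum.inr ab.2) ∈ p.edges)

/-- `M` is Pareto-optimal: no matching `N` has `φ(N,M) > 0` and `φ(M,N) = 0`. -/
def IsParetoOptimal [Fintype A] [Fintype B] (I : PrefSys A B) (M : Finset (A × B)) : Prop :=
  ¬ ∃ N : Finset (A × B), IsMatching I N ∧ 0 < phi I N M ∧ phi I M N = 0

/-! ### The auxiliary instance `G*` -/

/-- `A* = {a_0, …, a_{n0−1} : a ∈ A}` where `n0 = |A|`. -/
abbrev AStar (A : Type*) [Fintype A] : Type _ := A × Fin (Fintype.card A)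

/-- `B* = B̃ ∪ {d_1(a), …, d_{n0−1}(a) : a ∈ A}`; the dummy node `(a, j)`
(with `j : Fin (n0 − 1)`) stands for `d_{j+1}(a)`. -/
abbrev BStar (A : Type*) (B : Type*) [Fintype A] : Type _ :=
  B ⊕ (A × Fin (Fintype.card A - 1))

/-- The auxiliary instance `G*` with its edges and preferences. -/
def starSys [Fintype A] (I : PrefSys A B) : PrefSys (AStar A) (BStar A B) where
  E := fun ai w =>
    match ai, w with
    | (a, _i), Sum.inl b => I.E a b
    | (a, i), Sum.inr (a', j) => a = a' ∧ ((i : ℕ) = (j : ℕ) ∨ (i : ℕ) = (j : ℕ) + 1)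
  prefA := fun ai u v =>
    match ai, u, v with
    | (a, _i), Sum.inl b, Sum.inl b' => I.prefA a b b'
    | (a, i), Sum.inl _b, Sum.inr (a', j) => a = a' ∧ (j : ℕ) = (i : ℕ)
    | (a, i), Sum.inr (a', j), Sum.inl _b => a = a' ∧ (j : ℕ) + 1 = (i : ℕ)
    | (a, i), Sum.inr (a', j), Sum.inr (a'', j') =>
        a = a' ∧ a = a'' ∧ (j : ℕ) + 1 = (i : ℕ) ∧ (j' : ℕ) = (i : ℕ)
  prefB := fun w x y =>
    match w, x, y with
    | Sum.inl b, (a, i), (a', i') =>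
        (i' : ℕ) < (i : ℕ) ∨ ((i : ℕ) = (i' : ℕ) ∧ I.prefB b a a')
    | Sum.inr (a, j), (a', i), (a'', i') =>
        a' = a ∧ a'' = a ∧ (i : ℕ) = (j : ℕ) ∧ (i' : ℕ) = (j : ℕ) + 1

/-- The projection `S ↦ S'`: delete edges incident to dummy nodes and replace
`(a_i, b̃)` by `(a, b)`. -/
def proj [Fintype A] [Fintype B] (S : Finset (AStar A × BStar A B)) : Finset (A × B) :=
  Finset.univ.filter (fun ab : A × B =>
    ∃ i : Fin (Fintype.card A), ((ab.1, i), (Sum.inl ab.2 : BStar A B)) ∈ S)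

/-- `a ∈ A_i` for the level partition of `A` induced by a (stable) matching `S` in `G*`:
for `i ≤ n0 − 2`, `a ∈ A_i` iff `(a_i, b̃) ∈ S` for some `b̃ ∈ B̃`;
`A_{n0−1}` consists of all remaining nodes of `A`. -/
def AtLevelA [Fintype A] (S : Finset (AStar A × BStar A B)) (a : A) (i : ℕ) : Prop :=
  (i + 1 < Fintype.card A ∧
     ∃ j : Fin (Fintype.card A), (j : ℕ) = i ∧
       ∃ b : B, ((a, j), (Sum.inl b : BStar A B)) ∈ S) ∨
  (i + 1 = Fintype.card A ∧
     ∀ j : Fin (Fintype.card A), (j : ℕ) + 1 < Fintype.card A →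
       ∀ b : B, ((a, j), (Sum.inl b : BStar A B)) ∉ S)

/-- `b ∈ B_i` for the level partition of `B` induced by a (stable) matching `S` in `G*`:
for `1 ≤ i ≤ n0 − 1`, `b ∈ B_i` iff `(a_i, b̃) ∈ S` for some `a ∈ A_i`;
`B_0` consists of all remaining nodes of `B`. -/
def AtLevelB [Fintype A] (S : Finset (AStar A × BStar A B)) (b : B) (i : ℕ) : Prop :=
  (1 ≤ i ∧ i < Fintype.card A ∧
     ∃ j : Fin (Fintype.card A), (j : ℕ) = i ∧
       ∃ a : A, AtLevelA S a i ∧ ((a, j), (Sum.inl b : BStar A B)) ∈ S) ∨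
  (i = 0 ∧ ∀ j : Fin (Fintype.card A), 1 ≤ (j : ℕ) →
       ∀ a : A, AtLevelA S a (j : ℕ) → ((a, j), (Sum.inl b : BStar A B)) ∉ S)


structure LevelCert (I : PrefSys A B) (M : Finset (A × B)) (n : ℕ) (l : A → ℕ) (q : B → ℕ) :
    Prop where
  p1 : ∀ a b, (a, b) ∈ M → l a = q b
  p2 : ∀ a, l a < n
  p2' : ∀ a, ¬ matchedA M a → l a + 1 = n
  p3 : ∀ b, ¬ matchedB M b → q b = 0
  p4 : ∀ a b, I.E a b → ¬ matchedA M a →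
    ∃ a', (a', b) ∈ M ∧ I.prefB b a' a ∧ q b + 1 = n
  p5 : ∀ a b, I.E a b → ¬ matchedB M b → ∃ b', (a, b') ∈ M ∧ I.prefA a b' b ∧ l a = 0
  p6 : ∀ a b a' b', I.E a b → (a, b) ∉ M → (a, b') ∈ M → (a', b) ∈ M →
    l a ≤ q b + 1 ∧ (l a = q b + 1 → I.prefA a b' b ∧ I.prefB b a' a) ∧
    (l a = q b → ¬ (I.prefA a b b' ∧ I.prefB b a a'))

lemma sumA [Fintype A] (I : PrefSys A B) (N : Finset (A × B)) (hN : IsMatching I N) (f : A → ℤ) :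
    ∑ e ∈ N, f e.1 = ∑ a, if matchedA N a then f a else 0 := by
  rw [← Finset.sum_filter]
  have : Finset.univ.filter (fun a => matchedA N a) = N.image Prod.fst := by
    ext a; rw [Finset.mem_filter]; simp [matchedA]
  rw [this, Finset.sum_image]
  intro x hx y hy h
  exact hN.2.1 x hx y hy h

lemma sumB [Fintype B] (I : PrefSys A B) (N : Finset (A × B)) (hN : IsMatching I N) (f : B → ℤ) :
    ∑ e ∈ N, f e.2 = ∑ b, if matchedB N b then f b else 0 := by
  rw [← Finset.sum_filter]
  have : Finset.univ.filter (fun b => matchedB N b) = N.image Prod.snd := by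
    ext b; rw [Finset.mem_filter]; simp [matchedB]
  rw [this, Finset.sum_image]
  intro x hx y hy h
  exact hN.2.2 x hx y hy h

lemma cert_max [Fintype A] [Fintype B] (I : PrefSys A B) (M : Finset (A × B))
    (hM : IsMatching I M) (l : A → ℕ) (q : B → ℕ)
    (hc : LevelCert I M (Fintype.card A) l q) (N : Finset (A × B)) (hN : IsMatching I N) :
    N.card ≤ M.card := by
  by_cases hall : ∀ a, matchedA M a
  · have h1 : N.card ≤ Fintype.card A := by
      rw [← Finset.card_univ]
      exact Finset.card_le_card_of_injOn Prod.fst (by simp)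
        (fun x hx y hy h => hN.2.1 x hx y hy h)
    have h2 : Fintype.card A ≤ M.card := by
      choose g hg using hall
      rw [← Finset.card_univ]
      exact Finset.card_le_card_of_injOn (fun a => (a, g a)) (by simp [hg])
        (fun x hx y hy h => by simpa using congrArg Prod.fst h)
    omega
  · push Not at hall
    obtain ⟨a0, ha0⟩ := hall
    obtain ⟨k, hk, hkM⟩ : ∃ k < Fintype.card A, ∀ e ∈ M, l e.1 ≠ k := by
      by_contra hcon
      push Not at hcon
      have h1 : Fintype.card A ≤ M.card := by
        have : (Finset.range (Fintype.card A)) ⊆ M.image (fun e => l e.1) := by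
          intro k hk
          obtain ⟨e, he, h⟩ := hcon k (by simpa using hk)
          exact Finset.mem_image.2 ⟨e, he, h⟩
        have h2 := Finset.card_le_card this
        have h3 := Finset.card_image_le (s := M) (f := fun e => l e.1)
        simp only [Finset.card_range] at h2
        omega
      have h2 : M.card ≤ (Finset.univ.erase a0).card := by
        refine Finset.card_le_card_of_injOn Prod.fst ?_ (fun x hx y hy h => hM.2.1 x hx y hy h)
        intro e he
        simp only [Finset.coe_erase, Finset.coe_univ, Set.mem_diff, Set.mem_univ,
          Set.mem_singleton_iff, true_and]
        rintro rfl
        exact ha0 ⟨e.2, he⟩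
      rw [Finset.card_erase_of_mem (Finset.mem_univ _), Finset.card_univ] at h2
      have : 0 < Fintype.card A := Fintype.card_pos_iff.2 ⟨a0⟩
      omega
    have key : ∀ e ∈ N, ∃ m ∈ M, (m.1 = e.1 ∧ l m.1 < k) ∨ (m.2 = e.2 ∧ k ≤ l m.1) := by
      rintro ⟨a, b⟩ he
      have hE : I.E a b := hN.1 _ he
      by_cases hb : matchedB M b
      · obtain ⟨a', ha'⟩ := hb
        have h1 := hc.p1 _ _ ha'
        have hk1 := hkM _ ha'
        by_cases hk2 : k ≤ l a'
        · exact ⟨_, ha', Or.inr ⟨rfl, hk2⟩⟩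
        · by_cases ha : matchedA M a
          · obtain ⟨b', hb'⟩ := ha
            by_cases hk3 : l a < k
            · exact ⟨_, hb', Or.inl ⟨rfl, hk3⟩⟩
            · exfalso
              have hk4 := hkM _ hb'
              simp only at hk1 hk4
              by_cases hab : (a, b) ∈ M
              · have := hc.p1 _ _ hab
                omega
              · have := (hc.p6 a b a' b' hE hab hb' ha').1
                omega
          · exfalso
            obtain ⟨a'', h2, h3, h4⟩ := hc.p4 a b hE ha
            omega
      · obtain ⟨b', h2, h3, h4⟩ := hc.p5 a b hE hb
        have := hkM _ h2
        simp only at this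
        exact ⟨_, h2, Or.inl ⟨rfl, by simp only; omega⟩⟩
    choose! g hg hg' using key
    refine Finset.card_le_card_of_injOn g hg ?_
    intro x hx y hy h
    have hx' := hg' x hx
    have hy' := hg' y hy
    rw [← h] at hy'
    rcases hx' with ⟨h1, h2⟩ | ⟨h1, h2⟩ <;> rcases hy' with ⟨h3, h4⟩ | ⟨h3, h4⟩
    · exact hN.2.1 x hx y hy (h1.symm.trans h3)
    · omega
    · omega
    · exact hN.2.2 x hx y hy (h1.symm.trans h3)

def vA (I : PrefSys A B) (M N : Finset (A × B)) (a : A) : ℤ :=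
  (if prefersA I a N M then 1 else 0) - (if prefersA I a M N then 1 else 0)

def vB (I : PrefSys A B) (M N : Finset (A × B)) (b : B) : ℤ :=
  (if prefersB I b N M then 1 else 0) - (if prefersB I b M N then 1 else 0)

lemma phi_eq [Fintype A] [Fintype B] (I : PrefSys A B) (M N : Finset (A × B)) :
    (phi I M N : ℤ) = (∑ a, if prefersA I a M N then 1 else 0) +
      ∑ b, if prefersB I b M N then 1 else 0 := by
  unfold phi
  rw [Finset.card_filter]
  push_cast
  rw [Fintype.sum_sum_type]
  rfl

lemma vA_le (I : PrefSys A B) (M N : Finset (A × B)) (a : A) : vA I M N a ≤ 1 := by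
  unfold vA; split_ifs <;> simp
lemma vB_le (I : PrefSys A B) (M N : Finset (A × B)) (a : B) : vB I M N a ≤ 1 := by
  unfold vB; split_ifs <;> simp

lemma vA_iff (I : PrefSys A B) (hI : I.IsValid) (M N : Finset (A × B)) (hM : IsMatching I M)
    (hN : IsMatching I N) {a : A} {b b' : B} (h1 : (a, b) ∈ N) (h2 : (a, b') ∈ M) :
    (¬ I.prefA a b b' → vA I M N a ≤ 0) ∧ (I.prefA a b' b → vA I M N a ≤ -1) := by
  have e1 : ∀ c, (a, c) ∈ N → c = b := fun c hc => congrArg Prod.snd (hN.2.1 _ hc _ h1 rfl)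
  have e2 : ∀ c, (a, c) ∈ M → c = b' := fun c hc => congrArg Prod.snd (hM.2.1 _ hc _ h2 rfl)
  have k1 : prefersA I a N M → I.prefA a b b' := by
    rintro ⟨c, hc, h | ⟨d, hd, h⟩⟩
    · exact absurd ⟨_, h2⟩ h
    · rwa [e1 c hc, e2 d hd] at h
  have k2 : I.prefA a b' b → prefersA I a M N := fun h => ⟨_, h2, Or.inr ⟨_, h1, h⟩⟩
  have k3 : I.prefA a b' b → ¬ I.prefA a b b' := fun h h' => hI.1 _ _ (hI.2.1 _ _ _ _ h h')
  unfold vA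
  constructor
  · intro h
    rw [if_neg (fun h' => h (k1 h'))]
    split_ifs <;> simp
  · intro h
    rw [if_neg (fun h' => k3 h (k1 h')), if_pos (k2 h)]
    simp

lemma vB_iff (I : PrefSys A B) (hI : I.IsValid) (M N : Finset (A × B)) (hM : IsMatching I M)
    (hN : IsMatching I N) {b : B} {a a' : A} (h1 : (a, b) ∈ N) (h2 : (a', b) ∈ M) :
    (¬ I.prefB b a a' → vB I M N b ≤ 0) ∧ (I.prefB b a' a → vB I M N b ≤ -1) := by
  have e1 : ∀ c, (c, b) ∈ N → c = a := fun c hc => congrArg Prod.fst (hN.2.2 _ hc _ h1 rfl)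
  have e2 : ∀ c, (c, b) ∈ M → c = a' := fun c hc => congrArg Prod.fst (hM.2.2 _ hc _ h2 rfl)
  have k1 : prefersB I b N M → I.prefB b a a' := by
    rintro ⟨c, hc, h | ⟨d, hd, h⟩⟩
    · exact absurd ⟨_, h2⟩ h
    · rwa [e1 c hc, e2 d hd] at h
  have k2 : I.prefB b a' a → prefersB I b M N := fun h => ⟨_, h2, Or.inr ⟨_, h1, h⟩⟩
  have k3 : I.prefB b a' a → ¬ I.prefB b a a' :=
    fun h h' => hI.2.2.2.1 _ _ (hI.2.2.2.2.1 _ _ _ _ h h')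
  unfold vB
  constructor
  · intro h
    rw [if_neg (fun h' => h (k1 h'))]
    split_ifs <;> simp
  · intro h
    rw [if_neg (fun h' => k3 h (k1 h')), if_pos (k2 h)]
    simp

lemma cert_edge (I : PrefSys A B) (hI : I.IsValid) (M N : Finset (A × B))
    (hM : IsMatching I M) (hN : IsMatching I N) (n : ℕ) (l : A → ℕ) (q : B → ℕ)
    (hc : LevelCert I M n l q) (a : A) (b : B) (h : (a, b) ∈ N) :
    vA I M N a + vB I M N b ≤ 2 * ((q b : ℤ) - l a) := by
  have hE : I.E a b := hN.1 _ h
  have ua := vA_le I M N a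
  have ub := vB_le I M N b
  by_cases hab : (a, b) ∈ M
  · have h1 := (vA_iff I hI M N hM hN h hab).1 (hI.1 _ _)
    have h2 := (vB_iff I hI M N hM hN h hab).1 (hI.2.2.2.1 _ _)
    have := hc.p1 _ _ hab
    omega
  by_cases ha : matchedA M a
  · obtain ⟨b', hb'⟩ := ha
    have hA := vA_iff I hI M N hM hN h hb'
    by_cases hb : matchedB M b
    · obtain ⟨a', ha'⟩ := hb
      have hB := vB_iff I hI M N hM hN h ha'
      obtain ⟨c1, c2, c3⟩ := hc.p6 a b a' b' hE hab hb' ha'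
      rcases lt_trichotomy (l a) (q b) with hl | hl | hl
      · omega
      · by_cases hp : I.prefA a b b'
        · have hp2 : ¬ I.prefB b a a' := fun hp2 => c3 hl ⟨hp, hp2⟩
          have hne : a ≠ a' := by rintro rfl; exact hab ha'
          rcases hI.2.2.2.2.2 b a a' hE (hM.1 _ ha') hne with h5 | h5
          · exact absurd h5 hp2
          · have := hB.2 h5
            omega
        · have hne : b ≠ b' := by rintro rfl; exact hab hb'
          rcases hI.2.2.1 a b b' hE (hM.1 _ hb') hne with h5 | h5
          · exact absurd h5 hp
          · have := hA.2 h5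
            omega
      · have hl' : l a = q b + 1 := by omega
        have := hA.2 (c2 hl').1
        have := hB.2 (c2 hl').2
        omega
    · obtain ⟨b'', h2, h3, h4⟩ := hc.p5 a b hE hb
      have := (vA_iff I hI M N hM hN h h2).2 h3
      omega
  · obtain ⟨a', h2, h3, h4⟩ := hc.p4 a b hE ha
    have := (vB_iff I hI M N hM hN h h2).2 h3
    have := hc.p2 a
    omega

lemma cert_pop [Fintype A] [Fintype B] (I : PrefSys A B) (hI : I.IsValid) (M : Finset (A × B))
    (hM : IsMatching I M) (l : A → ℕ) (q : B → ℕ) (n : ℕ)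
    (hc : LevelCert I M n l q) (N : Finset (A × B)) (hN : IsMatching I N)
    (hcard : N.card = M.card) : 0 ≤ Delta I M N := by
  have hD : Delta I M N = - ((∑ a, vA I M N a) + ∑ b, vB I M N b) := by
    unfold Delta vA vB
    rw [phi_eq, phi_eq, Finset.sum_sub_distrib, Finset.sum_sub_distrib]
    ring
  have h1 : ∑ a, vA I M N a ≤ ∑ e ∈ N, vA I M N e.1 := by
    rw [sumA I N hN]
    refine Finset.sum_le_sum fun a _ => ?_
    split_ifs with h
    · exact le_rfl
    · unfold vA
      have : ¬ prefersA I a N M := fun ⟨b, hb, _⟩ => h ⟨b, hb⟩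
      rw [if_neg this]; split_ifs <;> simp
  have h2 : ∑ b, vB I M N b ≤ ∑ e ∈ N, vB I M N e.2 := by
    rw [sumB I N hN]
    refine Finset.sum_le_sum fun b _ => ?_
    split_ifs with h
    · exact le_rfl
    · unfold vB
      have : ¬ prefersB I b N M := fun ⟨a, hb, _⟩ => h ⟨a, hb⟩
      rw [if_neg this]; split_ifs <;> simp
  have h3 : ∑ e ∈ N, vA I M N e.1 + ∑ e ∈ N, vB I M N e.2 ≤
      ∑ e ∈ N, 2 * ((q e.2 : ℤ) - l e.1) := by
    rw [← Finset.sum_add_distrib]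
    exact Finset.sum_le_sum fun e he => cert_edge I hI M N hM hN n l q hc e.1 e.2 he
  rw [← Finset.mul_sum, Finset.sum_sub_distrib] at h3
  have h4 : ∑ e ∈ N, (q e.2 : ℤ) ≤ ∑ e ∈ M, (q e.2 : ℤ) := by
    rw [sumB I N hN (fun b => (q b : ℤ)), sumB I M hM (fun b => (q b : ℤ))]
    refine Finset.sum_le_sum fun b _ => ?_
    by_cases hb : matchedB M b
    · rw [if_pos hb]; split_ifs <;> simp
    · have := hc.p3 b hb
      simp [this]
  have h5 : ∑ e ∈ N, ((n : ℤ) - 1 - l e.1) ≤ ∑ e ∈ M, ((n : ℤ) - 1 - l e.1) := by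
    rw [sumA I N hN (fun b => ((n : ℤ) - 1 - l b)), sumA I M hM (fun b => ((n : ℤ) - 1 - l b))]
    refine Finset.sum_le_sum fun a _ => ?_
    by_cases hb : matchedA M a
    · have := hc.p2 a
      rw [if_pos hb]; split_ifs
      · exact le_rfl
      · omega
    · have := hc.p2' a hb
      rw [if_neg hb]; split_ifs
      · omega
      · exact le_rfl
  simp only [Finset.sum_sub_distrib, Finset.sum_const, hcard] at h5
  have h6 : ∑ e ∈ M, (q e.2 : ℤ) = ∑ e ∈ M, (l e.1 : ℤ) :=
    Finset.sum_congr rfl fun e he => by rw [hc.p1 e.1 e.2 he]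
  rw [hD]
  linarith

section Star
variable [Fintype A] {I : PrefSys A B} {S : Finset (AStar A × BStar A B)}

lemma S_fun (hS : IsStable (starSys I) S) {x : AStar A} {w w' : BStar A B}
    (h : (x, w) ∈ S) (h' : (x, w') ∈ S) : w = w' :=
  congrArg Prod.snd (hS.1.2.1 _ h _ h' rfl)

lemma S_inj (hS : IsStable (starSys I) S) {x x' : AStar A} {w : BStar A B}
    (h : (x, w) ∈ S) (h' : (x', w) ∈ S) : x = x' :=
  congrArg Prod.fst (hS.1.2.2 _ h _ h' rfl)

/-- `a_j` is matched to `d_{j+1}`. -/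
def Dn (S : Finset (AStar A × BStar A B)) (a : A) (j : ℕ) : Prop :=
  ∃ (h : j < Fintype.card A) (h' : j < Fintype.card A - 1),
    ((a, ⟨j, h⟩), (Sum.inr (a, ⟨j, h'⟩) : BStar A B)) ∈ S

/-- `a_{j+1}` is matched to `d_{j+1}`. -/
def Up (S : Finset (AStar A × BStar A B)) (a : A) (j : ℕ) : Prop :=
  ∃ (h : j + 1 < Fintype.card A) (h' : j < Fintype.card A - 1),
    ((a, ⟨j + 1, h⟩), (Sum.inr (a, ⟨j, h'⟩) : BStar A B)) ∈ S

lemma dummy_cases (hS : IsStable (starSys I) S) {a a' : A} {i : Fin (Fintype.card A)}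
    {j : Fin (Fintype.card A - 1)} (h : ((a, i), (Sum.inr (a', j) : BStar A B)) ∈ S) :
    a = a' ∧ (((i : ℕ) = j ∧ Dn S a j) ∨ ((i : ℕ) = j + 1 ∧ Up S a j)) := by
  have hE := hS.1.1 _ h
  obtain ⟨i, hi⟩ := i
  obtain ⟨j, hj⟩ := j
  simp only [starSys] at hE
  obtain ⟨rfl, rfl | rfl⟩ := hE
  · exact ⟨rfl, Or.inl ⟨rfl, hi, hj, h⟩⟩
  · exact ⟨rfl, Or.inr ⟨rfl, hi, hj, h⟩⟩

lemma U1 (hS : IsStable (starSys I) S) (a : A) (j : ℕ) (hj : j + 1 < Fintype.card A)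
    (h : ¬ Dn S a j) : Up S a j := by
  by_contra hu
  have hj' : j < Fintype.card A - 1 := by omega
  apply hS.2 (a, ⟨j + 1, hj⟩) (Sum.inr (a, ⟨j, hj'⟩))
  refine ⟨by simp [starSys], fun hm => hu ⟨hj, hj', hm⟩, ?_, Or.inl ?_⟩
  · by_cases hm : matchedA S (a, ⟨j + 1, hj⟩)
    · right
      obtain ⟨w, hw⟩ := hm
      refine ⟨w, hw, ?_⟩
      rcases w with b | ⟨a', k⟩
      · simp [starSys]
      · obtain ⟨rfl, ⟨h1, h2⟩ | ⟨h1, h2⟩⟩ := dummy_cases hS hw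
        · simp only at h1
          simp [starSys, h1]
        · simp only at h1
          have : (k : ℕ) = j := by omega
          rw [this] at h2
          exact absurd h2 hu
    · exact Or.inl hm
  · rintro ⟨⟨a', i⟩, hm⟩
    obtain ⟨rfl, ⟨h1, h2⟩ | ⟨h1, h2⟩⟩ := dummy_cases hS hm
    · exact h h2
    · exact hu h2

lemma not_Dn_Up_succ (hS : IsStable (starSys I) S) {a : A} {j : ℕ} (h : Up S a j) :
    ¬ Dn S a (j + 1) := by
  obtain ⟨h1, h2, h3⟩ := h
  rintro ⟨h4, h5, h6⟩
  have := S_fun hS h3 h6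
  simp at this

lemma not_Dn_Up (hS : IsStable (starSys I) S) {a : A} {j : ℕ} (h : Up S a j) :
    ¬ Dn S a j := by
  obtain ⟨h1, h2, h3⟩ := h
  rintro ⟨h4, h5, h6⟩
  have := S_inj hS h3 h6
  simp at this

lemma U2 (hS : IsStable (starSys I) S) (a : A) (j : ℕ) (h : ¬ Dn S a j) :
    ∀ d, j + d + 1 < Fintype.card A → Up S a (j + d) := by
  intro d
  induction d with
  | zero => intro hd; exact U1 hS a j hd h
  | succ d ih =>
    intro hd
    exact U1 hS a _ hd (not_Dn_Up_succ hS (ih (by omega)))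

lemma U4 (hS : IsStable (starSys I) S) {a : A} {i : Fin (Fintype.card A)} {b : B}
    (h : ((a, i), (Sum.inl b : BStar A B)) ∈ S) (j : ℕ) (hj : j < i) : Dn S a j := by
  by_contra hd
  obtain ⟨i, hi⟩ := i
  simp only at hj
  obtain ⟨h1, h2, h3⟩ := U2 hS a j hd (i - 1 - j) (by omega)
  have e : j + (i - 1 - j) + 1 = i := by omega
  simp only [e] at h3
  have := S_fun hS h h3
  simp at this

lemma U3 (hS : IsStable (starSys I) S) {a : A} {i j : Fin (Fintype.card A)} {b b' : B}
    (h : ((a, i), (Sum.inl b : BStar A B)) ∈ S) (h' : ((a, j), (Sum.inl b' : BStar A B)) ∈ S) :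
    i = j := by
  have key : ∀ (i j : Fin (Fintype.card A)) (b b' : B),
      ((a, i), (Sum.inl b : BStar A B)) ∈ S → ((a, j), (Sum.inl b' : BStar A B)) ∈ S →
      ¬ (i : ℕ) < j := by
    intro i j b b' h h' hlt
    obtain ⟨h1, h2, h3⟩ := U4 hS h' i hlt
    have := S_fun hS h h3
    simp at this
  have := key i j b b' h h'
  have := key j i b' b h' h
  exact Fin.ext (by omega)

lemma U5 (hS : IsStable (starSys I) S) {a : A}
    (hn : ∀ i b, ((a, i), (Sum.inl b : BStar A B)) ∉ S) (j : ℕ) (hj : j + 1 < Fintype.card A) :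
    Dn S a j := by
  induction j with
  | zero =>
    by_contra hd
    have hu := U1 hS a _ hj hd
    have hj' : 0 < Fintype.card A - 1 := by omega
    refine hS.2 (a, ⟨0, by omega⟩) (Sum.inr (a, ⟨0, hj'⟩))
      ⟨by simp [starSys], fun hm => hd ⟨_, _, hm⟩, Or.inl ?_, Or.inr ?_⟩
    · rintro ⟨w, hw⟩
      rcases w with b | ⟨a', k⟩
      · exact hn _ _ hw
      · obtain ⟨rfl, ⟨h1, h2⟩ | ⟨h1, h2⟩⟩ := dummy_cases hS hw
        · simp only at h1
          rw [← h1] at h2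
          exact hd h2
        · simp only at h1
          omega
    · obtain ⟨h1, h2, h3⟩ := hu
      exact ⟨_, h3, by simp [starSys]⟩
  | succ j ih =>
    have ih := ih (by omega)
    by_contra hd
    have hu := U1 hS a _ hj hd
    have hj' : j + 1 < Fintype.card A - 1 := by omega
    refine hS.2 (a, ⟨j + 1, by omega⟩) (Sum.inr (a, ⟨j + 1, hj'⟩))
      ⟨by simp [starSys], fun hm => hd ⟨_, _, hm⟩, Or.inl ?_, Or.inr ?_⟩
    · rintro ⟨w, hw⟩
      rcases w with b | ⟨a', k⟩
      · exact hn _ _ hw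
      · obtain ⟨rfl, ⟨h1, h2⟩ | ⟨h1, h2⟩⟩ := dummy_cases hS hw
        · simp only at h1
          rw [← h1] at h2
          exact hd h2
        · simp only at h1
          have : (k : ℕ) = j := by omega
          rw [this] at h2
          exact not_Dn_Up hS h2 ih
    · obtain ⟨h1, h2, h3⟩ := hu
      exact ⟨_, h3, by simp [starSys]⟩

lemma U6 (hS : IsStable (starSys I) S) {a : A}
    (hn : ∀ i b, ((a, i), (Sum.inl b : BStar A B)) ∉ S) (i : Fin (Fintype.card A))
    (hi : (i : ℕ) + 1 = Fintype.card A) : ¬ matchedA S (a, i) := by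
  rintro ⟨w, hw⟩
  rcases w with b | ⟨a', k⟩
  · exact hn _ _ hw
  · have hk := k.2
    obtain ⟨rfl, ⟨h1, h2⟩ | ⟨h1, h2⟩⟩ := dummy_cases hS hw
    · omega
    · exact not_Dn_Up hS h2 (U5 hS hn k (by omega))

lemma F (hS : IsStable (starSys I) S) {a : A} {b : B} {j : Fin (Fintype.card A)} (hE : I.E a b)
    (hw : ¬ matchedA S (a, j) ∨ ∃ w, ((a, j), w) ∈ S ∧ (starSys I).prefA (a, j) (Sum.inl b) w)
    (hnot : ((a, j), (Sum.inl b : BStar A B)) ∉ S) :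
    ∃ a' i', ((a', i'), (Sum.inl b : BStar A B)) ∈ S ∧ (j : ℕ) ≤ i' ∧
      ((j : ℕ) = i' → ¬ I.prefB b a a') := by
  by_contra hcon
  push Not at hcon
  refine hS.2 (a, j) (Sum.inl b) ⟨hE, hnot, hw, ?_⟩
  by_cases hm : matchedB S (Sum.inl b : BStar A B)
  · right
    obtain ⟨⟨a', i'⟩, hm⟩ := hm
    refine ⟨_, hm, ?_⟩
    have := hcon a' i' hm
    simp only [starSys]
    by_cases hlt : (i' : ℕ) < j
    · exact Or.inl hlt
    · exact Or.inr (this (by omega))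
  · exact Or.inl hm

lemma FDn (hS : IsStable (starSys I) S) {a : A} {b : B} {j : ℕ} (hE : I.E a b)
    (hd : Dn S a j) :
    ∃ a' i', ((a', i'), (Sum.inl b : BStar A B)) ∈ S ∧ j ≤ i' ∧
      (j = i' → ¬ I.prefB b a a') := by
  obtain ⟨h1, h2, h3⟩ := hd
  refine F hS (j := ⟨j, h1⟩) hE (Or.inr ⟨_, h3, by simp [starSys]⟩) ?_
  intro h
  have := S_fun hS h h3
  simp at this

end Star

lemma mem_proj [Fintype A] [Fintype B] {S : Finset (AStar A × BStar A B)} {a : A} {b : B} :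
    (a, b) ∈ proj S ↔ ∃ i, ((a, i), (Sum.inl b : BStar A B)) ∈ S := by
  simp [proj]

lemma proj_matching [Fintype A] [Fintype B] {I : PrefSys A B}
    {S : Finset (AStar A × BStar A B)} (hS : IsStable (starSys I) S) :
    IsMatching I (proj S) := by
  refine ⟨?_, ?_, ?_⟩
  · rintro ⟨a, b⟩ h
    obtain ⟨i, h⟩ := mem_proj.1 h
    exact hS.1.1 _ h
  · rintro ⟨a, b⟩ h ⟨a', b'⟩ h' e
    simp only at e
    subst e
    obtain ⟨i, h⟩ := mem_proj.1 h
    obtain ⟨i', h'⟩ := mem_proj.1 h'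
    have := U3 hS h h'
    subst this
    have := S_fun hS h h'
    simp only [Sum.inl.injEq] at this
    rw [this]
  · rintro ⟨a, b⟩ h ⟨a', b'⟩ h' e
    simp only at e
    subst e
    obtain ⟨i, h⟩ := mem_proj.1 h
    obtain ⟨i', h'⟩ := mem_proj.1 h'
    have := S_inj hS h h'
    simp only [Prod.mk.injEq] at this
    rw [this.1]

lemma exists_cert [Fintype A] [Fintype B] {I : PrefSys A B} (hI : I.IsValid)
    {S : Finset (AStar A × BStar A B)} (hS : IsStable (starSys I) S) :
    ∃ l q, LevelCert I (proj S) (Fintype.card A) l q := by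
  have hl : ∀ a : A, ∃ k : ℕ, k < Fintype.card A ∧
      (∀ i b, ((a, i), (Sum.inl b : BStar A B)) ∈ S → k = i) ∧
      ((∀ i b, ((a, i), (Sum.inl b : BStar A B)) ∉ S) → k + 1 = Fintype.card A) := by
    intro a
    by_cases h : ∃ i b, ((a, i), (Sum.inl b : BStar A B)) ∈ S
    · obtain ⟨i, b, h⟩ := h
      exact ⟨i, i.2, fun j b' h' => by rw [U3 hS h h'], fun h' => absurd h (h' _ _)⟩
    · push Not at h
      have : 0 < Fintype.card A := Fintype.card_pos_iff.2 ⟨a⟩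
      exact ⟨Fintype.card A - 1, by omega, fun i b h' => absurd h' (h _ _), fun _ => by omega⟩
  have hq : ∀ b : B, ∃ k : ℕ,
      (∀ a i, ((a, i), (Sum.inl b : BStar A B)) ∈ S → k = i) ∧
      ((∀ a i, ((a, i), (Sum.inl b : BStar A B)) ∉ S) → k = 0) := by
    intro b
    by_cases h : ∃ a i, ((a, i), (Sum.inl b : BStar A B)) ∈ S
    · obtain ⟨a, i, h⟩ := h
      refine ⟨i, fun a' j h' => ?_, fun h' => absurd h (h' _ _)⟩
      have := S_inj hS h h'
      simp only [Prod.mk.injEq] at this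
      rw [this.2]
    · push Not at h
      exact ⟨0, fun i b h' => absurd h' (h _ _), fun _ => rfl⟩
  choose l hl1 hl2 hl3 using hl
  choose q hq1 hq2 using hq
  have unA : ∀ a, ¬ matchedA (proj S) a → ∀ i b, ((a, i), (Sum.inl b : BStar A B)) ∉ S :=
    fun a h i b h' => h ⟨b, mem_proj.2 ⟨i, h'⟩⟩
  have unB : ∀ b, ¬ matchedB (proj S) b → ∀ a i, ((a, i), (Sum.inl b : BStar A B)) ∉ S :=
    fun b h a i h' => h ⟨a, mem_proj.2 ⟨i, h'⟩⟩
  have totB : ∀ a a' b, I.E a b → I.E a' b → a ≠ a' → ¬ I.prefB b a a' → I.prefB b a' a :=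
    fun a a' b h1 h2 h3 h4 => (hI.2.2.2.2.2 b a a' h1 h2 h3).resolve_left h4
  have totA : ∀ a b b', I.E a b → I.E a b' → b ≠ b' → ¬ I.prefA a b b' → I.prefA a b' b :=
    fun a b b' h1 h2 h3 h4 => (hI.2.2.1 a b b' h1 h2 h3).resolve_left h4
  have p4 : ∀ a b, I.E a b → ¬ matchedA (proj S) a →
      ∃ a', (a', b) ∈ proj S ∧ I.prefB b a' a ∧ q b + 1 = Fintype.card A := by
    intro a b hE hu
    have hn := unA a hu
    have h0 : 0 < Fintype.card A := Fintype.card_pos_iff.2 ⟨a⟩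
    obtain ⟨a', i', h1, h2, h3⟩ := F hS (j := ⟨Fintype.card A - 1, by omega⟩) hE
      (Or.inl (U6 hS hn _ (by simp only; omega))) (hn _ _)
    simp only at h2 h3
    have hi' := i'.2
    refine ⟨a', mem_proj.2 ⟨_, h1⟩, totB _ _ _ hE (hS.1.1 _ h1) ?_ (h3 (by omega)), ?_⟩
    · rintro rfl; exact hn _ _ h1
    · rw [hq1 _ _ _ h1]; omega
  refine ⟨l, q, ?_, hl1, fun a h => hl3 a (unA a h), fun b h => hq2 b (unB b h), p4, ?_, ?_⟩
  · intro a b h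
    obtain ⟨i, h⟩ := mem_proj.1 h
    rw [hl2 _ _ _ h, hq1 _ _ _ h]
  · intro a b hE hu
    have hn := unB b hu
    by_cases hm : matchedA (proj S) a
    · obtain ⟨b', hb'⟩ := hm
      obtain ⟨i, h⟩ := mem_proj.1 hb'
      refine ⟨b', hb', ?_, ?_⟩
      · refine totA _ _ _ hE (hS.1.1 _ h) ?_ ?_
        · rintro rfl; exact hn _ _ h
        · intro hp
          obtain ⟨a', i', h1, _⟩ := F hS (j := i) hE (Or.inr ⟨_, h, hp⟩) (hn _ _)
          exact hn _ _ h1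
      · rw [hl2 _ _ _ h]
        by_contra hi
        obtain ⟨a', i', h1, _⟩ := FDn hS hE (U4 hS h 0 (by omega))
        exact hn _ _ h1
    · obtain ⟨a', h1, _⟩ := p4 a b hE hm
      exact absurd ⟨_, h1⟩ hu
  · intro a b a' b' hE hab h1 h2
    obtain ⟨i, h⟩ := mem_proj.1 h1
    obtain ⟨i', h'⟩ := mem_proj.1 h2
    rw [hl2 _ _ _ h, hq1 _ _ _ h']
    have hnot : ∀ j, ((a, j), (Sum.inl b : BStar A B)) ∉ S :=
      fun j hj => hab (mem_proj.2 ⟨j, hj⟩)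
    have hna : a ≠ a' := by rintro rfl; exact hnot _ h'
    have hnb : b ≠ b' := by rintro rfl; exact hnot _ h
    have f1 : ∀ j < (i : ℕ), j ≤ i' ∧ (j = i' → ¬ I.prefB b a a') := by
      intro j hj
      obtain ⟨a'', i'', g1, g2⟩ := FDn hS hE (U4 hS h j hj)
      have := S_inj hS h' g1
      simp only [Prod.mk.injEq] at this
      rw [this.1, this.2]
      exact g2
    have f2 : I.prefA a b b' → (i : ℕ) ≤ i' ∧ ((i : ℕ) = i' → ¬ I.prefB b a a') := by
      intro hp
      obtain ⟨a'', i'', g1, g2⟩ := F hS (j := i) hE (Or.inr ⟨_, h, hp⟩) (hnot _)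
      have := S_inj hS h' g1
      simp only [Prod.mk.injEq] at this
      rw [this.1, this.2]
      exact g2
    refine ⟨?_, ?_, ?_⟩
    · by_contra hlt
      have := (f1 (i - 1) (by omega)).1
      omega
    · intro he
      refine ⟨totA _ _ _ hE (hS.1.1 _ h) hnb fun hp => ?_,
        totB _ _ _ hE (hS.1.1 _ h') hna ((f1 i' (by omega)).2 rfl)⟩
      have := (f2 hp).1
      omega
    · rintro he ⟨hp, hp'⟩
      exact (f2 hp).2 he hp'

/-- If `S` is a stable matching in `G*`, then `S'` is a popular
max-matching in `G`. -/
theorem stmt3 {A B : Type*} [Fintype A] [Fintype B] [DecidableEq A] [DecidableEq B]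
    (I : PrefSys A B) (hI : I.IsValid)
    (S : Finset (AStar A × BStar A B)) (hS : IsStable (starSys I) S) :
    IsPopularMaxMatching I (proj S) := by
  obtain ⟨l, q, hc⟩ := exists_cert hI hS
  have hM := proj_matching hS
  refine ⟨⟨hM, fun N hN => cert_max I _ hM l q hc N hN⟩, fun N hN => ?_⟩
  exact cert_pop I hI _ hM l q _ hc N hN.1
    (le_antisymm (cert_max I _ hM l q hc N hN.1) (hN.2 _ hM))

end PopMax
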